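/- arXiv:0801.0679 — 2 statements merged into one kernel-verified Lean document; each statement's English description precedes it below -/
import Mathlib

section
/- A board 𝔖 has no isolated point if and only if V(𝔖,ℤ) has maximal rank in 𝓕(𝔖,ℤ), i.e. if and only if the moves of 𝔖 span the full |𝔖|-dimensional space 𝓕(𝔖,ℚ) of functions 𝔖 → ℚ over ℚ. -/
def dirs : Finset (ℤ × ℤ) := {(1,0), (-1,0), (0,1), (0,-1)}

def chi (X : ℤ × ℤ) : (ℤ × ℤ) → ℤ := fun Y => if Y = X then 1 else 0

def chiSet (I : Finset (ℤ × ℤ)) : (ℤ × ℤ) → ℤ := fun P => if P ∈ I then 1 else 0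

def IsMove (S : Finset (ℤ × ℤ)) (g : (ℤ × ℤ) → ℤ) : Prop :=
  ∃ P d : ℤ × ℤ, d ∈ dirs ∧ P ∈ S ∧ P + d ∈ S ∧ P + d + d ∈ S ∧
    g = chi P + chi (P + d) - chi (P + d + d)

def IsMiddle (S : Finset (ℤ × ℤ)) (Q : ℤ × ℤ) : Prop :=
  ∃ P d : ℤ × ℤ, d ∈ dirs ∧ P ∈ S ∧ P + d ∈ S ∧ P + d + d ∈ S ∧ Q = P + d

def Neighbor (S : Finset (ℤ × ℤ)) (A B : ℤ × ℤ) : Prop :=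
  ∃ d ∈ dirs, A ∈ S ∧ A + d ∈ S ∧ A + d + d ∈ S ∧ B = A + d + d

def NoIsolatedPoint (S : Finset (ℤ × ℤ)) : Prop :=
  ∀ P ∈ S, ∃ Q, Relation.EqvGen (Neighbor S) P Q ∧ IsMiddle S Q

def IsResourceCount (S : Finset (ℤ × ℤ)) (π : (ℤ × ℤ) → ℝ) : Prop :=
  ∀ P d : ℤ × ℤ, d ∈ dirs → P ∈ S → P + d ∈ S → P + d + d ∈ S →
    π (P + d + d) ≤ π P + π (P + d)

def LegalMove (S I : Finset (ℤ × ℤ)) (g : (ℤ × ℤ) → ℤ) (I' : Finset (ℤ × ℤ)) : Prop :=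
  ∃ P d : ℤ × ℤ, d ∈ dirs ∧ P ∈ S ∧ P + d ∈ S ∧ P + d + d ∈ S ∧
    g = chi P + chi (P + d) - chi (P + d + d) ∧
    P ∈ I ∧ P + d ∈ I ∧ P + d + d ∉ I ∧
    I' = (I \ {P, P + d}) ∪ {P + d + d}

def Transforms (S : Finset (ℤ × ℤ)) :
    List ((ℤ × ℤ) → ℤ) → Finset (ℤ × ℤ) → Finset (ℤ × ℤ) → Prop
  | [], I, J => I = J
  | g :: L, I, J => ∃ I', LegalMove S I g I' ∧ Transforms S L I' J

def boxProd (g₁ g₂ : (ℤ × ℤ) → ℤ) : Sym2 (ℤ × ℤ) → ℤ :=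
  Sym2.lift ⟨fun A B => if A = B then g₁ A * g₂ A else g₁ A * g₂ B + g₁ B * g₂ A, by
    intro A B
    by_cases h : A = B
    · subst h; rfl
    · simp only [if_neg h, if_neg (Ne.symm h)]; ring⟩

def moveAbs (g : (ℤ × ℤ) → ℤ) : (ℤ × ℤ) → ℤ := fun A => |g A|

def IsQMove (S : Finset (ℤ × ℤ)) (c : Sym2 (ℤ × ℤ) → ℤ) : Prop :=
  (∃ A g, A ∈ S ∧ IsMove S g ∧ g A = 0 ∧ c = boxProd (fun B => 2 * chi A B) g) ∨
  (∃ g, IsMove S g ∧ c = boxProd (moveAbs g) g)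

def StepList (S : Finset (ℤ × ℤ)) :
    List (Finset (ℤ × ℤ)) → List ((ℤ × ℤ) → ℤ) → Prop
  | [_], [] => True
  | I :: I' :: Ps, g :: L => LegalMove S I g I' ∧ StepList S (I' :: Ps) L
  | _, _ => False

def pOfSeq (A : ℤ × ℤ) : List (Finset (ℤ × ℤ)) → List ((ℤ × ℤ) → ℤ) → ℕ
  | I :: Ps, g :: L => (if g A ≠ 0 then 1 else if A ∈ I then 1 else 0) + pOfSeq A Ps L
  | _, _ => 0

def bothCount (A A' : ℤ × ℤ) : List ((ℤ × ℤ) → ℤ) → ℕ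
  | [] => 0
  | g :: L => (if g A ≠ 0 ∧ g A' ≠ 0 then 1 else 0) + bothCount A A' L

noncomputable def pagoda (P : ℤ × ℤ) : ℝ := ((Real.sqrt 5 - 1) / 2) ^ (P.1.natAbs + P.2.natAbs)

def suppSubmodule (S : Finset (ℤ × ℤ)) : Submodule ℚ ((ℤ × ℤ) → ℚ) where
  carrier := {h | ∀ P ∉ S, h P = 0}
  add_mem' := by
    intro a b ha hb P hP
    simp only [Pi.add_apply, ha P hP, hb P hP, add_zero]
  zero_mem' := by
    intro P hP
    rfl
  smul_mem' := by
    intro c a ha P hP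
    simp only [Pi.smul_apply, ha P hP, smul_zero]

/-!
The two opposite moves with middle point `Q` and extremities `P`, `R` are `χ_P + χ_Q - χ_R` and
`χ_R + χ_Q - χ_P`. Their sum is `2 χ_Q`, so every middle point lies in the span of the moves, and
then so does `χ_P - χ_R`; hence being in the span is a property of `≡`-classes, which holds for the
classes that contain a middle point. Conversely, if a class `C` contains no middle point, then
`C` contains neither or both of the extremities of each move, so `f ↦ ∑ X ∈ C, f X` vanishes on all
moves, while it takes the value `1` at `χ_P` for `P ∈ C`.
-/

/-- A peg solitaire board on an arbitrary type of points: a finite set of points together with the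
jumps `Jump P Q R`, from `P` over `Q` to `R`, which can all be reversed. The three points of a jump
need not be distinct. That `R` is a point of the board follows from `mem_points` by reversal. -/
structure JumpBoard (α : Type*) where
  points : Finset α
  Jump : α → α → α → Prop
  symm {P Q R : α} : Jump P Q R → Jump R Q P
  mem_points {P Q R : α} : Jump P Q R → P ∈ points ∧ Q ∈ points

namespace JumpBoard

variable {α : Type*} (B : JumpBoard α)

/-- A middle point of a move, as in the relation on lattice boards of the same name. -/
def IsMiddle (Q : α) : Prop :=
  ∃ P R, B.Jump P Q R

/-- The neighbor relation: two points are neighbors if they are the extremities of a move. -/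
def Neighbor (P R : α) : Prop :=
  ∃ Q, B.Jump P Q R

/-- The absence of isolated points: every point of the board is equivalent, under the equivalence
relation `≡` generated by the neighbor relation, to a middle point. -/
def NoIsolatedPoint : Prop :=
  ∀ P ∈ B.points, ∃ Q, Relation.EqvGen B.Neighbor P Q ∧ B.IsMiddle Q

variable (k : Type*) [Ring k]

/-- The module `𝓕(B, k)` of functions on the board, encoded as the functions on the whole type of
points that vanish off the board. -/
def functionsOn : Submodule k (α → k) :=
  Submodule.pi (B.points : Set α)ᶜ fun _ => ⊥

variable [DecidableEq α]

/-- The module `V(B, k)` generated by the moves `χ_P + χ_Q - χ_R`, as functions on the whole type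
of points rather than on the board. -/
def moveSpan : Submodule k (α → k) :=
  Submodule.span k
    {f | ∃ P Q R, B.Jump P Q R ∧ f = Pi.single P 1 + Pi.single Q 1 - Pi.single R 1}

variable {B k} {P Q R : α}

theorem move_mem_moveSpan (h : B.Jump P Q R) :
    Pi.single P 1 + Pi.single Q 1 - Pi.single R 1 ∈ B.moveSpan k :=
  Submodule.subset_span ⟨P, Q, R, h, rfl⟩

theorem single_mem_functionsOn (hP : P ∈ B.points) : Pi.single P 1 ∈ B.functionsOn k :=
  fun _ hX => Pi.single_eq_of_ne (ne_of_mem_of_not_mem hP hX).symm 1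

theorem moveSpan_le_functionsOn : B.moveSpan k ≤ B.functionsOn k := by
  refine Submodule.span_le.2 ?_
  rintro _ ⟨P, Q, R, h, rfl⟩
  have hP := (B.mem_points h).1
  have hQ := (B.mem_points h).2
  have hR := (B.mem_points (B.symm h)).1
  exact sub_mem (add_mem (single_mem_functionsOn hP) (single_mem_functionsOn hQ))
    (single_mem_functionsOn hR)

theorem functionsOn_le_iff {V : Submodule k (α → k)} :
    B.functionsOn k ≤ V ↔ ∀ P ∈ B.points, Pi.single P 1 ∈ V := by
  refine ⟨fun h P hP => h (single_mem_functionsOn hP), fun h f hf => ?_⟩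
  have hsum : f = ∑ P ∈ B.points, f P • Pi.single P 1 := by
    funext X
    by_cases hX : X ∈ B.points
    · simp [Pi.single_apply, hX]
    · simpa [Pi.single_apply, hX] using hf X hX
  rw [hsum]
  exact V.sum_mem fun P hP => V.smul_mem _ (h P hP)

theorem single_mem_moveSpan_of_isMiddle (h2 : IsUnit (2 : k)) (hQ : B.IsMiddle Q) :
    Pi.single Q 1 ∈ B.moveSpan k := by
  obtain ⟨P, R, h⟩ := hQ
  have hsum := add_mem (move_mem_moveSpan (k := k) h) (move_mem_moveSpan (B.symm h))
  rw [← Submodule.smul_mem_iff_of_isUnit _ h2, two_smul]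
  convert hsum using 1
  abel

theorem single_mem_moveSpan_iff_of_neighbor (h2 : IsUnit (2 : k)) (h : B.Neighbor P R) :
    Pi.single P 1 ∈ B.moveSpan k ↔ Pi.single R 1 ∈ B.moveSpan k := by
  obtain ⟨Q, h⟩ := h
  have hQ := single_mem_moveSpan_of_isMiddle h2 ⟨P, R, h⟩
  have hPR : Pi.single P 1 - Pi.single R 1 ∈ B.moveSpan k := by
    convert sub_mem (move_mem_moveSpan h) hQ using 1
    abel
  exact ⟨fun hP => (Submodule.sub_mem_iff_right _ hP).1 hPR,
    fun hR => (Submodule.sub_mem_iff_left _ hR).1 hPR⟩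

theorem single_mem_moveSpan_iff_of_eqvGen (h2 : IsUnit (2 : k))
    (h : Relation.EqvGen B.Neighbor P R) :
    Pi.single P 1 ∈ B.moveSpan k ↔ Pi.single R 1 ∈ B.moveSpan k := by
  induction h with
  | rel _ _ h => exact single_mem_moveSpan_iff_of_neighbor h2 h
  | refl _ => exact Iff.rfl
  | symm _ _ _ ih => exact ih.symm
  | trans _ _ _ _ _ ih₁ ih₂ => exact ih₁.trans ih₂

theorem sum_mul_eq_zero_of_mem_moveSpan {w : α → k}
    (hw : ∀ P Q R, B.Jump P Q R → w P + w Q = w R) {f : α → k} (hf : f ∈ B.moveSpan k) :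
    ∑ X ∈ B.points, f X * w X = 0 := by
  induction hf using Submodule.span_induction with
  | mem f hf =>
    obtain ⟨P, Q, R, h, rfl⟩ := hf
    have hP := (B.mem_points h).1
    have hQ := (B.mem_points h).2
    have hR := (B.mem_points (B.symm h)).1
    simp [Pi.single_apply, add_mul, sub_mul, Finset.sum_add_distrib, hP, hQ, hR, hw P Q R h]
  | zero => simp
  | add f g _ _ hf hg => simp [add_mul, Finset.sum_add_distrib, hf, hg]
  | smul c f _ hf => simp [mul_assoc, ← Finset.mul_sum, hf]

theorem single_notMem_moveSpan_of_forall_not_isMiddle [Nontrivial k] (hP : P ∈ B.points)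
    (hmid : ∀ Q, Relation.EqvGen B.Neighbor P Q → ¬ B.IsMiddle Q) :
    Pi.single P 1 ∉ B.moveSpan k := by
  intro hmem
  let C : Set α := {X | Relation.EqvGen B.Neighbor P X}
  have hw (X Y Z : α) (h : B.Jump X Y Z) :
      C.indicator (1 : α → k) X + C.indicator 1 Y = C.indicator 1 Z := by
    have hXZ : X ∈ C ↔ Z ∈ C :=
      ⟨fun hX => hX.trans _ _ _ (.rel _ _ ⟨Y, h⟩),
        fun hZ => hZ.trans _ _ _ (.rel _ _ ⟨Y, B.symm h⟩)⟩
    have hY : Y ∉ C := fun hY => hmid Y hY ⟨X, Z, h⟩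
    by_cases hZ : Z ∈ C <;> simp [hXZ, hY, hZ]
  have hPC : P ∈ C := .refl P
  have hzero := sum_mul_eq_zero_of_mem_moveSpan hw hmem
  simp [Pi.single_apply, hP, hPC] at hzero

theorem single_mem_moveSpan_iff [Nontrivial k] (h2 : IsUnit (2 : k)) (hP : P ∈ B.points) :
    Pi.single P 1 ∈ B.moveSpan k ↔ ∃ Q, Relation.EqvGen B.Neighbor P Q ∧ B.IsMiddle Q := by
  constructor
  · contrapose!
    exact single_notMem_moveSpan_of_forall_not_isMiddle hP
  · rintro ⟨Q, hPQ, hQ⟩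
    exact (single_mem_moveSpan_iff_of_eqvGen h2 hPQ).2 (single_mem_moveSpan_of_isMiddle h2 hQ)

end JumpBoard

theorem no_isolated_iff_full_rank_general {α k : Type*} [DecidableEq α] [Ring k] [Nontrivial k]
    (h2 : IsUnit (2 : k)) (B : JumpBoard α) :
    B.NoIsolatedPoint ↔ B.moveSpan k = B.functionsOn k :=
  calc
    B.NoIsolatedPoint ↔ ∀ P ∈ B.points, Pi.single P 1 ∈ B.moveSpan k :=
      forall₂_congr fun _ hP => (JumpBoard.single_mem_moveSpan_iff h2 hP).symm
    _ ↔ B.functionsOn k ≤ B.moveSpan k := JumpBoard.functionsOn_le_iff.symm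
    _ ↔ B.moveSpan k = B.functionsOn k := JumpBoard.moveSpan_le_functionsOn.ge_iff_eq

theorem neg_mem_dirs {d : ℤ × ℤ} (hd : d ∈ dirs) : -d ∈ dirs := by
  simp only [dirs, Finset.mem_insert, Finset.mem_singleton] at hd ⊢
  rcases hd with rfl | rfl | rfl | rfl <;> simp

/-- A finite subset of `ℤ²` as a board, whose jumps are those of length two in the four directions
of the axes. -/
def latticeBoard (S : Finset (ℤ × ℤ)) : JumpBoard (ℤ × ℤ) where
  points := S
  Jump P Q R := ∃ d ∈ dirs, P ∈ S ∧ P + d ∈ S ∧ P + d + d ∈ S ∧ Q = P + d ∧ R = P + d + d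
  symm := by
    rintro P _ _ ⟨d, hd, hP, hQ, hR, rfl, rfl⟩
    exact ⟨-d, neg_mem_dirs hd, hR, by simpa using hQ, by simpa using hP, by simp, by simp⟩
  mem_points := by
    rintro P _ _ ⟨d, -, hP, hQ, -, rfl, -⟩
    exact ⟨hP, hQ⟩

theorem isMiddle_latticeBoard (S : Finset (ℤ × ℤ)) : (latticeBoard S).IsMiddle = IsMiddle S := by
  ext Q
  constructor
  · rintro ⟨P, _, d, hd, hP, hQ, hR, h, rfl⟩
    exact ⟨P, d, hd, hP, hQ, hR, h⟩
  · rintro ⟨P, d, hd, hP, hQ, hR, h⟩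
    exact ⟨P, P + d + d, d, hd, hP, hQ, hR, h, rfl⟩

theorem neighbor_latticeBoard (S : Finset (ℤ × ℤ)) : (latticeBoard S).Neighbor = Neighbor S := by
  ext P R
  constructor
  · rintro ⟨_, d, hd, hP, hQ, hR, rfl, h⟩
    exact ⟨d, hd, hP, hQ, hR, h⟩
  · rintro ⟨d, hd, hP, hQ, hR, h⟩
    exact ⟨P + d, d, hd, hP, hQ, hR, rfl, h⟩

theorem noIsolatedPoint_latticeBoard (S : Finset (ℤ × ℤ)) :
    (latticeBoard S).NoIsolatedPoint ↔ NoIsolatedPoint S := by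
  rw [JumpBoard.NoIsolatedPoint, isMiddle_latticeBoard, neighbor_latticeBoard]
  rfl

theorem intCast_move (P Q R : ℤ × ℤ) (k : Type*) [Ring k] :
    (fun X => (((chi P + chi Q - chi R) X : ℤ) : k)) =
      Pi.single P 1 + Pi.single Q 1 - Pi.single R 1 := by
  funext X
  simp [chi, Pi.single_apply]

theorem moveSpan_latticeBoard (S : Finset (ℤ × ℤ)) (k : Type*) [Ring k] :
    (latticeBoard S).moveSpan k =
      Submodule.span k
        ((fun (f : (ℤ × ℤ) → ℤ) (P : ℤ × ℤ) => (f P : k)) '' {f | IsMove S f}) := by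
  refine congrArg (Submodule.span k) (Set.Subset.antisymm ?_ ?_)
  · rintro _ ⟨P, _, _, ⟨d, hd, hP, hQ, hR, rfl, rfl⟩, rfl⟩
    exact ⟨_, ⟨P, d, hd, hP, hQ, hR, rfl⟩, intCast_move P _ _ k⟩
  · rintro _ ⟨_, ⟨P, d, hd, hP, hQ, hR, rfl⟩, rfl⟩
    exact ⟨P, _, _, ⟨d, hd, hP, hQ, hR, rfl, rfl⟩, intCast_move P _ _ k⟩

theorem functionsOn_latticeBoard (S : Finset (ℤ × ℤ)) :
    (latticeBoard S).functionsOn ℚ = suppSubmodule S :=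
  rfl

/-- A board has no isolated point iff the moves span, over `ℚ`, the full space
of rational-valued functions on the board. -/
theorem no_isolated_iff_full_rank (S : Finset (ℤ × ℤ)) :
    NoIsolatedPoint S ↔
      Submodule.span ℚ
          ((fun (f : (ℤ × ℤ) → ℤ) (P : ℤ × ℤ) => (f P : ℚ)) '' {f | IsMove S f})
        = suppSubmodule S := by
  rw [← noIsolatedPoint_latticeBoard, ← moveSpan_latticeBoard, ← functionsOn_latticeBoard]
  exact no_isolated_iff_full_rank_general two_ne_zero.isUnit (latticeBoard S)
end

section
/- Let I be a position on the board 𝔖 and A, A′ ∈ 𝔖. If there exists a nonnegative resource count π on 𝔖 such that ⟨χ_I, π⟩ = Σ_{B∈I} π(B) < π(A) + π(A′), then no position reachable from I by legal moves contains both A and A′ (i.e. Height(A, A′, I) = ∞). -/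
/-!
The total value `∑ B ∈ K, π B` of a position never increases under a legal move, since a move
trades `π P + π Q` for `π R ≤ π P + π Q`. As `π` is nonnegative on the board, a reachable position
containing `A` and `A'` would have total value at least `π A + π A'`, already more than that of `I`.
-/

theorem zero_notMem_dirs : (0 : ℤ × ℤ) ∉ dirs := by
  decide

theorem sum_sdiff_pair_union_singleton_add {α M : Type*} [DecidableEq α] [AddCommMonoid M]
    {s : Finset α} {p q r : α} (hp : p ∈ s) (hq : q ∈ s) (hr : r ∉ s) (hpq : p ≠ q) (f : α → M) :
    (∑ x ∈ (s \ {p, q}) ∪ {r}, f x) + (f p + f q) = (∑ x ∈ s, f x) + f r := by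
  have hpair : {p, q} ⊆ s := Finset.insert_subset hp (Finset.singleton_subset_iff.2 hq)
  have hdisj : Disjoint (s \ {p, q}) {r} :=
    Finset.disjoint_singleton_right.2 fun h => hr (Finset.sdiff_subset h)
  calc (∑ x ∈ (s \ {p, q}) ∪ {r}, f x) + (f p + f q)
      = (∑ x ∈ s \ {p, q}, f x) + f r + ∑ x ∈ {p, q}, f x := by
        rw [Finset.sum_union hdisj, Finset.sum_singleton, Finset.sum_pair hpq]
    _ = (∑ x ∈ s, f x) + f r := by
        rw [add_right_comm, Finset.sum_sdiff hpair]

section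

variable {S I J : Finset (ℤ × ℤ)} {g : (ℤ × ℤ) → ℤ} {L : List ((ℤ × ℤ) → ℤ)}
  {π : (ℤ × ℤ) → ℝ}

theorem LegalMove.subset (h : LegalMove S I g J) (hI : I ⊆ S) : J ⊆ S := by
  obtain ⟨P, d, -, -, -, hR, -, -, -, -, rfl⟩ := h
  exact Finset.union_subset (Finset.sdiff_subset.trans hI) (Finset.singleton_subset_iff.2 hR)

theorem LegalMove.sum_le (h : LegalMove S I g J) (hπ : IsResourceCount S π) :
    ∑ B ∈ J, π B ≤ ∑ B ∈ I, π B := by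
  obtain ⟨P, d, hd, hP, hQ, hR, -, hPI, hQI, hRI, rfl⟩ := h
  have hPQ : P ≠ P + d := left_ne_add.2 (ne_of_mem_of_not_mem hd zero_notMem_dirs)
  have hbalance := sum_sdiff_pair_union_singleton_add hPI hQI hRI hPQ π
  have hmove : π (P + d + d) ≤ π P + π (P + d) := hπ P d hd hP hQ hR
  linarith

theorem Transforms.subset (h : Transforms S L I J) (hI : I ⊆ S) : J ⊆ S := by
  induction L generalizing I with
  | nil => exact h ▸ hI
  | cons g L ih =>
    obtain ⟨I', hmove, hrest⟩ := h
    exact ih hrest (hmove.subset hI)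

theorem Transforms.sum_le (h : Transforms S L I J) (hπ : IsResourceCount S π) :
    ∑ B ∈ J, π B ≤ ∑ B ∈ I, π B := by
  induction L generalizing I with
  | nil => exact h ▸ le_rfl
  | cons g L ih =>
    obtain ⟨I', hmove, hrest⟩ := h
    exact (ih hrest).trans (hmove.sum_le hπ)

end

/-- If there is a nonnegative resource count `π` with `⟨χ_I,π⟩ < π(A) + π(A')`,
then no position reachable from `I` contains both `A` and `A'`
(i.e. `Height(A,A',I) = ∞`). -/
theorem infinite_pair_height_criterion (S I : Finset (ℤ × ℤ)) (hI : I ⊆ S)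
    (A A' : ℤ × ℤ) (hA : A ∈ S) (hA' : A' ∈ S) (hne : A ≠ A')
    (π : (ℤ × ℤ) → ℝ) (hπ : IsResourceCount S π) (hnonneg : ∀ B ∈ S, 0 ≤ π B)
    (hlt : ∑ B ∈ I, π B < π A + π A') :
    ∀ (L : List ((ℤ × ℤ) → ℤ)) (K : Finset (ℤ × ℤ)),
      Transforms S L I K → ¬(A ∈ K ∧ A' ∈ K) := by
  rintro L K hK ⟨hAK, hA'K⟩
  have hKS : K ⊆ S := hK.subset hI
  have hpair : π A + π A' ≤ ∑ B ∈ K, π B :=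
    Finset.add_le_sum (fun B hB => hnonneg B (hKS hB)) hAK hA'K hne
  exact (hpair.trans (hK.sum_le hπ)).not_gt hlt
end
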